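/- Let $f \in W^{1,1}((0,T)) \cap C([0,T])$ attain its maximum over $[0,T]$ at a point $t_0 \in (0,T]$. Then the Riemann-Liouville fractional derivative of order $\alpha \in (0,1)$ of $f(\cdot) - f(0)$ is nonnegative at $t_0$: $\partial_t^\alpha (f - f(0))(t_0) \geq 0$. -/

import Mathlib

open MeasureTheory Set

noncomputable section

/-- Riemann–Liouville fractional derivative of order `α`:
`∂_t^α v (t) = d/dt ∫_0^t (t-s)^{-α}/Γ(1-α) · v(s) ds`. -/
def riemannLiouville (α : ℝ) (v : ℝ → ℝ) (t : ℝ) : ℝ :=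
  deriv (fun τ => ∫ s in Set.Ioc 0 τ, (τ - s) ^ (-α) / Real.Gamma (1 - α) * v s) t

/-! Put `w r = v t₀ - v (t₀ - r) ≥ 0`. Up to the derivative of
`v t₀ * (t₀ - h) ^ (1 - α) / (1 - α)`, which contributes a nonnegative amount, the claim is that the
right derivative `d` at `0` of `A h = ∫ r in h..t₀, (r - h) ^ (-α) * w r` is nonnegative. Since
`w ≥ 0`, replacing the endpoint `t₀` by a smaller `b` only increases `A 0 - A h`, so if `d < 0`
one may assume `c * h ≤ A 0 - A h` on `[0, b]` with `c > 0`. Integrate this against the Marchaud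
weight `h ^ (α - 2)` over `[δ, b]`. The left side tends to `c * b ^ α / α`. By Fubini the right side
becomes an integral of `w` against a kernel that can be computed in closed form and is dominated by
an integrable approximate identity of width `δ`, so it is bounded by a quantity tending to a
multiple of `w 0 = 0`; hence `c ≤ 0`. -/

open Filter Topology

/-- The domain `a < x ≤ b`, `x < y ≤ b` of an iterated integral `∫ x in a..b, ∫ y in x..b`. Both
coordinates range over half-open intervals, as interval integrals do. -/
def upperTriangle (a b : ℝ) : Set (ℝ × ℝ) := {p | p.1 ∈ Ioc a b ∧ p.2 ∈ Ioc p.1 b}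

theorem measurableSet_upperTriangle (a b : ℝ) : MeasurableSet (upperTriangle a b) := by
  simp only [upperTriangle, mem_Ioc]
  measurability

section UpperTriangle

variable {a b : ℝ} {F : ℝ → ℝ → ℝ}

theorem integral_upperTriangle_indicator_snd (x : ℝ) :
    ∫ y, (upperTriangle a b).indicator F.uncurry (x, y) =
      (Ioc a b).indicator (fun x ↦ ∫ y in x..b, F x y) x := by
  by_cases hx : x ∈ Ioc a b
  · rw [indicator_of_mem hx, intervalIntegral.integral_of_le hx.2,
      ← integral_indicator measurableSet_Ioc]
    congr with y
    simp [indicator, upperTriangle, hx.1, hx.2]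
  · rw [indicator_of_notMem hx, ← integral_zero ℝ ℝ]
    congr with y
    exact indicator_of_notMem (fun h ↦ hx h.1) _

theorem integral_upperTriangle_indicator_fst (y : ℝ) :
    ∫ x, (upperTriangle a b).indicator F.uncurry (x, y) =
      (Ioc a b).indicator (fun y ↦ ∫ x in a..y, F x y) y := by
  by_cases hy : y ∈ Ioc a b
  · rw [indicator_of_mem hy, intervalIntegral.integral_of_le hy.1.le,
      integral_Ioc_eq_integral_Ioo, ← integral_indicator measurableSet_Ioo]
    congr with x
    have hmem : (x, y) ∈ upperTriangle a b ↔ x ∈ Ioo a y :=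
      ⟨fun h ↦ ⟨h.1.1, h.2.1⟩, fun h ↦ ⟨⟨h.1, h.2.le.trans hy.2⟩, h.2, hy.2⟩⟩
    simp [indicator, hmem]
  · rw [indicator_of_notMem hy, ← integral_zero ℝ ℝ]
    congr with x
    exact indicator_of_notMem (fun h ↦ hy ⟨h.1.1.trans h.2.1, h.2.2⟩) _

theorem intervalIntegrable_integral_of_integrableOn_upperTriangle (hab : a ≤ b)
    (hF : IntegrableOn F.uncurry (upperTriangle a b)) :
    IntervalIntegrable (fun x ↦ ∫ y in x..b, F x y) volume a b := by
  rw [intervalIntegrable_iff_integrableOn_Ioc_of_le hab,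
    ← integrable_indicator_iff measurableSet_Ioc]
  simpa only [integral_upperTriangle_indicator_snd] using
    ((integrable_indicator_iff (measurableSet_upperTriangle a b)).2 hF).integral_prod_left

theorem integral_integral_swap_upperTriangle (hab : a ≤ b)
    (hF : IntegrableOn F.uncurry (upperTriangle a b)) :
    ∫ x in a..b, ∫ y in x..b, F x y = ∫ y in a..b, ∫ x in a..y, F x y := by
  have hswap := integral_integral_swap
    (f := fun x y ↦ (upperTriangle a b).indicator F.uncurry (x, y))
    ((integrable_indicator_iff (measurableSet_upperTriangle a b)).2 hF)
  simpa only [integral_upperTriangle_indicator_snd, integral_upperTriangle_indicator_fst,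
    integral_indicator measurableSet_Ioc, intervalIntegral.integral_of_le hab] using hswap

end UpperTriangle

theorem tendsto_setIntegral_mul_comp_mul_nhdsGT {k g : ℝ → ℝ} {l M : ℝ}
    (hk : IntegrableOn k (Ioi 0)) (hg : AEStronglyMeasurable g) (hM : ∀ x, |g x| ≤ M)
    (hlim : Tendsto g (𝓝[>] 0) (𝓝 l)) :
    Tendsto (fun δ ↦ ∫ u in Ioi 0, k u * g (δ * u)) (𝓝[>] 0) (𝓝 (∫ u in Ioi 0, k u * l)) := by
  refine tendsto_integral_filter_of_dominated_convergence (fun u ↦ |k u| * M) ?_ ?_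
    (hk.norm.mul_const M) ?_
  · filter_upwards [self_mem_nhdsWithin] with δ hδ
    exact hk.1.mul (hg.comp_quasiMeasurePreserving
      (Measure.quasiMeasurePreserving_smul volume (ne_of_gt hδ))).restrict
  · refine .of_forall fun δ ↦ .of_forall fun u ↦ ?_
    rw [norm_mul]
    exact mul_le_mul_of_nonneg_left (hM _) (norm_nonneg _)
  · refine (ae_restrict_iff' measurableSet_Ioi).2 (.of_forall fun u (hu : 0 < u) ↦ ?_)
    refine (hlim.comp ?_).const_mul _
    refine tendsto_nhdsWithin_iff.2 ⟨?_, ?_⟩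
    · exact ((continuous_mul_const u).tendsto' 0 0 (zero_mul u)).mono_left nhdsWithin_le_nhds
    · filter_upwards [self_mem_nhdsWithin] with δ hδ using mul_pos hδ hu

/-- An integrable majorant on `(0, ∞)` of `(u ^ (1 - α) - max 0 (u - 1) ^ (1 - α)) / u`, the kernel
of the Marchaud derivative of order `1 - α` truncated at `1` and applied to an Abel transform. -/
def marchaudMajorant (α u : ℝ) : ℝ := u ^ (-α) / max 1 u

theorem integrableOn_marchaudMajorant {α : ℝ} (hα : α ∈ Ioo 0 1) :
    IntegrableOn (marchaudMajorant α) (Ioi 0) := by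
  rw [← Ioc_union_Ioi_eq_Ioi zero_le_one]
  refine IntegrableOn.union ?_ ?_
  · refine IntegrableOn.congr_fun (f := fun u ↦ u ^ (-α)) ?_ (fun u hu ↦ ?_) measurableSet_Ioc
    · exact (intervalIntegral.intervalIntegrable_rpow' (by linarith [hα.2])).1
    · simp [marchaudMajorant, hu.2]
  · refine IntegrableOn.congr_fun (f := fun u ↦ u ^ (-α - 1)) ?_ (fun u hu ↦ ?_) measurableSet_Ioi
    · exact integrableOn_Ioi_rpow_of_lt (by linarith [hα.1]) one_pos
    · have hu : 1 < u := hu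
      simp only [marchaudMajorant, max_eq_right hu.le]
      exact Real.rpow_sub_one (by positivity) _

theorem hasDerivAt_sub_div_rpow {α r x : ℝ} (hα : α < 1) (hx : x ∈ Ioo 0 r) :
    HasDerivAt (fun h ↦ -((r - h) / h) ^ (1 - α) / ((1 - α) * r))
      (x ^ (α - 2) * (r - x) ^ (-α)) x := by
  obtain ⟨hx0, hxr⟩ := hx
  have hrx : 0 < r - x := sub_pos.2 hxr
  have hr : 0 < r := hx0.trans hxr
  have h1 : 0 < 1 - α := sub_pos.2 hα
  have hbase : HasDerivAt (fun h ↦ (r - h) / h) (-r / x ^ 2) x := by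
    convert! ((hasDerivAt_id x).const_sub r).div (hasDerivAt_id x) hx0.ne' using 1
    simp only [id]
    ring
  convert! (hbase.rpow_const (p := 1 - α) (Or.inl (div_pos hrx hx0).ne')).neg.div_const
    ((1 - α) * r) using 1
  have hpow : ((r - x) / x) ^ (1 - α - 1) = (r - x) ^ (-α) * x ^ α := by
    rw [sub_sub_cancel_left, Real.div_rpow hrx.le hx0.le, Real.rpow_neg hx0.le, div_inv_eq_mul]
  rw [hpow, Real.rpow_sub hx0, Real.rpow_two]
  field_simp

theorem intervalIntegrable_rpow_mul_sub_rpow {α β δ r : ℝ} (hα : α < 1) (hδ : 0 < δ)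
    (hr : δ ≤ r) : IntervalIntegrable (fun h ↦ h ^ β * (r - h) ^ (-α)) volume δ r := by
  have hint : IntervalIntegrable (fun h ↦ (r - h) ^ (-α)) volume δ r := by
    simpa using (intervalIntegral.intervalIntegrable_rpow' (a := r - δ) (b := 0)
      (neg_lt_neg hα)).comp_sub_left r
  refine hint.continuousOn_mul (continuousOn_id.rpow_const fun x hx ↦ Or.inl ?_)
  rw [uIcc_of_le hr] at hx
  exact (hδ.trans_le hx.1).ne'

theorem integral_rpow_mul_sub_rpow {α δ r : ℝ} (hα : α < 1) (hδ : 0 < δ) (hr : δ ≤ r) :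
    ∫ h in δ..r, h ^ (α - 2) * (r - h) ^ (-α) = ((r - δ) / δ) ^ (1 - α) / ((1 - α) * r) := by
  have hcont : ContinuousOn (fun h ↦ -((r - h) / h) ^ (1 - α) / ((1 - α) * r)) (Icc δ r) := by
    refine ContinuousOn.div_const (ContinuousOn.neg (ContinuousOn.rpow_const ?_ fun x hx ↦
      Or.inr (sub_pos.2 hα).le)) _
    exact (continuousOn_const.sub continuousOn_id).div continuousOn_id
      fun x hx ↦ (hδ.trans_le hx.1).ne'
  rw [intervalIntegral.integral_eq_sub_of_hasDerivAt_of_le hr hcont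
    (fun x hx ↦ hasDerivAt_sub_div_rpow hα ⟨hδ.trans hx.1, hx.2⟩)
    (intervalIntegrable_rpow_mul_sub_rpow hα hδ hr)]
  simp [Real.zero_rpow (sub_pos.2 hα).ne', neg_div]

theorem rpow_neg_sub_rpow_div_le_marchaudMajorant {α u : ℝ} (hα : α ∈ Ico 0 1) (hu : 1 ≤ u) :
    u ^ (-α) - (u - 1) ^ (1 - α) / u ≤ marchaudMajorant α u := by
  have hu0 : 0 < u := one_pos.trans_le hu
  have hpow : (u - 1) * u ^ (-α) ≤ (u - 1) ^ (1 - α) := by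
    rcases hu.eq_or_lt with rfl | hu1
    · simp [Real.zero_rpow (sub_pos.2 hα.2).ne']
    · have hv : 0 < u - 1 := sub_pos.2 hu1
      rw [sub_eq_add_neg 1 α, Real.rpow_one_add' hv.le (by linarith [hα.2])]
      exact mul_le_mul_of_nonneg_left
        (Real.rpow_le_rpow_of_nonpos hv (by linarith) (by linarith [hα.1])) hv.le
  rw [marchaudMajorant, max_eq_right hu, sub_le_iff_le_add, ← add_div, le_div_iff₀ hu0]
  linarith

/-- The right-sided Abel transform of `w` with terminal point `b`, that is `Γ(1 - α)` times the
right-sided Riemann–Liouville integral of order `1 - α`. Only `h ≤ b` is meaningful. -/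
def abelTransform (α b : ℝ) (w : ℝ → ℝ) (h : ℝ) : ℝ :=
  ∫ r in h..b, (r - h) ^ (-α) * w r

section Abel

variable {α b M : ℝ} {w : ℝ → ℝ}

theorem intervalIntegrable_sub_rpow_mul (hα : α < 1) (hw : AEStronglyMeasurable w)
    (hM : ∀ x, |w x| ≤ M) (h c d : ℝ) :
    IntervalIntegrable (fun r ↦ (r - h) ^ (-α) * w r) volume c d := by
  have hpow : IntervalIntegrable (fun r ↦ (r - h) ^ (-α)) volume c d := by
    simpa using (intervalIntegral.intervalIntegrable_rpow' (a := c - h) (b := d - h)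
      (neg_lt_neg hα)).comp_sub_right h
  rw [intervalIntegrable_iff] at hpow ⊢
  exact hpow.mul_bdd hw.restrict (.of_forall hM)

theorem integrableOn_upperTriangle_mul_sub_rpow_mul {a : ℝ} {φ : ℝ → ℝ} (hα : α < 1)
    (hφ : IntegrableOn φ (Ioc a b)) (hw : AEStronglyMeasurable w) (hM : ∀ x, |w x| ≤ M) :
    IntegrableOn (Function.uncurry fun h r ↦ φ h * ((r - h) ^ (-α) * w r))
      (upperTriangle a b) := by
  have hpow : IntegrableOn (fun x : ℝ ↦ x ^ (-α)) (Ioc 0 (b - a)) :=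
    (intervalIntegral.intervalIntegrable_rpow' (neg_lt_neg hα)).1
  have hconv := (((integrable_indicator_iff measurableSet_Ioc).2 hφ).convolution_integrand
    (.mul ℝ ℝ) ((integrable_indicator_iff measurableSet_Ioc).2 hpow)).swap
  refine (hconv.mul_bdd hw.comp_snd (.of_forall fun p ↦ hM p.2)).integrableOn.congr_fun ?_
    (measurableSet_upperTriangle a b)
  rintro ⟨h, r⟩ ⟨hh, hr⟩
  have hrh : r - h ∈ Ioc 0 (b - a) := ⟨sub_pos.2 hr.1, sub_le_sub hr.2 hh.1.le⟩
  simp [indicator_of_mem hh, indicator_of_mem hrh, mul_assoc]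

theorem intervalIntegrable_mul_abelTransform {a : ℝ} {φ : ℝ → ℝ} (hα : α < 1) (hab : a ≤ b)
    (hφ : IntegrableOn φ (Ioc a b)) (hw : AEStronglyMeasurable w) (hM : ∀ x, |w x| ≤ M) :
    IntervalIntegrable (fun h ↦ φ h * abelTransform α b w h) volume a b := by
  simpa only [abelTransform, ← intervalIntegral.integral_const_mul] using
    intervalIntegrable_integral_of_integrableOn_upperTriangle hab
      (integrableOn_upperTriangle_mul_sub_rpow_mul hα hφ hw hM)

theorem integral_mul_abelTransform {a : ℝ} {φ : ℝ → ℝ} (hα : α < 1) (hab : a ≤ b)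
    (hφ : IntegrableOn φ (Ioc a b)) (hw : AEStronglyMeasurable w) (hM : ∀ x, |w x| ≤ M) :
    ∫ h in a..b, φ h * abelTransform α b w h =
      ∫ r in a..b, (∫ h in a..r, φ h * (r - h) ^ (-α)) * w r := by
  simpa only [abelTransform, ← intervalIntegral.integral_const_mul,
    ← intervalIntegral.integral_mul_const, mul_assoc] using
    integral_integral_swap_upperTriangle hab
      (integrableOn_upperTriangle_mul_sub_rpow_mul hα hφ hw hM)

theorem intervalIntegrable_rpow_of_pos {β δ : ℝ} (hδ : 0 < δ) (hδb : δ ≤ b) :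
    IntervalIntegrable (fun h : ℝ ↦ h ^ β) volume δ b :=
  intervalIntegral.intervalIntegrable_rpow (Or.inr (notMem_uIcc_of_lt hδ (hδ.trans_le hδb)))

theorem integral_rpow_mul_abelTransform {δ : ℝ} (hα : α < 1) (hδ : 0 < δ) (hδb : δ ≤ b)
    (hw : AEStronglyMeasurable w) (hM : ∀ x, |w x| ≤ M) :
    ∫ h in δ..b, h ^ (α - 2) * abelTransform α b w h =
      (1 - α)⁻¹ * ∫ r in δ..b, (r / δ - 1) ^ (1 - α) / r * w r := by
  rw [integral_mul_abelTransform hα hδb (intervalIntegrable_rpow_of_pos hδ hδb).1 hw hM,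
    ← intervalIntegral.integral_const_mul]
  refine intervalIntegral.integral_congr fun r hr ↦ ?_
  rw [uIcc_of_le hδb] at hr
  simp only [integral_rpow_mul_sub_rpow hα hδ hr.1, sub_div, div_self hδ.ne']
  have h1 : 1 - α ≠ 0 := (sub_pos.2 hα).ne'
  field_simp

theorem integral_rpow_sub_two_le {δ : ℝ} (hα : α < 1) (hδ : 0 < δ) (hδb : δ ≤ b) :
    ∫ h in δ..b, h ^ (α - 2) ≤ (1 - α)⁻¹ * δ ^ (α - 1) := by
  have hb : 0 ≤ b ^ (α - 1) := Real.rpow_nonneg (hδ.le.trans hδb) _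
  rw [integral_rpow (Or.inr ⟨by linarith, notMem_uIcc_of_lt hδ (hδ.trans_le hδb)⟩),
    show α - 2 + 1 = -(1 - α) by ring, div_neg, ← neg_div, div_eq_inv_mul]
  rw [neg_sub, neg_sub]
  exact mul_le_mul_of_nonneg_left (sub_le_self _ hb) (inv_nonneg.2 (sub_pos.2 hα).le)

theorem inv_mul_div_rpow_neg {δ r : ℝ} (hδ : 0 < δ) (hr : 0 ≤ r) :
    δ⁻¹ * (r / δ) ^ (-α) = δ ^ (α - 1) * r ^ (-α) := by
  rw [Real.div_rpow hr hδ.le, Real.rpow_neg hδ.le, Real.rpow_sub_one hδ.ne']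
  field_simp

theorem integrableOn_marchaudMajorant_div_mul {δ : ℝ} (hα : α ∈ Ioo 0 1) (hδ : 0 < δ)
    (hw : AEStronglyMeasurable w) (hM : ∀ x, |w x| ≤ M) :
    IntegrableOn (fun r ↦ δ⁻¹ * marchaudMajorant α (r / δ) * w r) (Ioi 0) := by
  have hk : IntegrableOn (fun r ↦ marchaudMajorant α (δ⁻¹ * r)) (Ioi 0) := by
    rw [integrableOn_Ioi_comp_mul_left_iff _ _ (inv_pos.2 hδ), mul_zero]
    exact integrableOn_marchaudMajorant hα
  simp only [inv_mul_eq_div] at hk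
  exact (hk.const_mul δ⁻¹).mul_bdd hw.restrict (.of_forall hM)

theorem integral_marchaudMajorant_mul_comp_mul {δ : ℝ} (hδ : 0 < δ) :
    ∫ u in Ioi 0, marchaudMajorant α u * w (δ * u) =
      ∫ r in Ioi 0, δ⁻¹ * marchaudMajorant α (r / δ) * w r := by
  have hscale := integral_comp_mul_left_Ioi (fun r ↦ marchaudMajorant α (r / δ) * w r) 0 hδ
  simpa only [mul_div_cancel_left₀ _ hδ.ne', mul_zero, smul_eq_mul, ← integral_const_mul,
    ← mul_assoc] using hscale

theorem inv_mul_marchaudMajorant_div_of_le {δ r : ℝ} (hδ : 0 < δ) (hr : r ∈ Icc 0 δ) :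
    δ⁻¹ * marchaudMajorant α (r / δ) = δ ^ (α - 1) * r ^ (-α) := by
  rw [marchaudMajorant, max_eq_left ((div_le_one hδ).2 hr.2), div_one,
    inv_mul_div_rpow_neg hδ hr.1]

theorem rpow_mul_rpow_neg_sub_le_inv_mul_marchaudMajorant_div {δ r : ℝ} (hα : α ∈ Ico 0 1)
    (hδ : 0 < δ) (hr : δ ≤ r) :
    δ ^ (α - 1) * r ^ (-α) - (r / δ - 1) ^ (1 - α) / r ≤ δ⁻¹ * marchaudMajorant α (r / δ) := by
  have hr0 : 0 < r := hδ.trans_le hr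
  calc δ ^ (α - 1) * r ^ (-α) - (r / δ - 1) ^ (1 - α) / r
      = δ⁻¹ * ((r / δ) ^ (-α) - (r / δ - 1) ^ (1 - α) / (r / δ)) := by
        rw [mul_sub, inv_mul_div_rpow_neg hδ hr0.le]
        field_simp
    _ ≤ δ⁻¹ * marchaudMajorant α (r / δ) := mul_le_mul_of_nonneg_left
        (rpow_neg_sub_rpow_div_le_marchaudMajorant hα ((one_le_div hδ).2 hr)) (inv_nonneg.2 hδ.le)

theorem intervalIntegrable_div_sub_one_rpow_div_mul {δ : ℝ} (hα : α ≤ 1) (hδ : 0 < δ)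
    (hδb : δ ≤ b) (hw : AEStronglyMeasurable w) (hM : ∀ x, |w x| ≤ M) :
    IntervalIntegrable (fun r ↦ (r / δ - 1) ^ (1 - α) / r * w r) volume δ b := by
  have hcont : ContinuousOn (fun r : ℝ ↦ (r / δ - 1) ^ (1 - α) / r) (Icc δ b) :=
    ContinuousOn.div (ContinuousOn.rpow_const (by fun_prop) fun _ _ ↦ Or.inr (sub_nonneg.2 hα))
      continuousOn_id fun r hr ↦ (hδ.trans_le hr.1).ne'
  have hint := hcont.intervalIntegrable_of_Icc (μ := volume) hδb
  rw [intervalIntegrable_iff] at hint ⊢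
  exact hint.mul_bdd hw.restrict (.of_forall hM)

theorem rpow_mul_abelTransform_zero_sub_le {δ : ℝ} (hα : α ∈ Ioo 0 1) (hδ : 0 < δ) (hδb : δ ≤ b)
    (hw : AEStronglyMeasurable w) (hw0 : ∀ x, 0 ≤ w x) (hM : ∀ x, |w x| ≤ M) :
    δ ^ (α - 1) * abelTransform α b w 0 - ∫ r in δ..b, (r / δ - 1) ^ (1 - α) / r * w r ≤
      ∫ r in (0 : ℝ)..b, δ⁻¹ * marchaudMajorant α (r / δ) * w r := by
  set K : ℝ → ℝ := fun r ↦ δ⁻¹ * marchaudMajorant α (r / δ) * w r with hK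
  have hKint : ∀ {c d : ℝ}, 0 ≤ c → c ≤ d → IntervalIntegrable K volume c d := fun hc hcd ↦
    (intervalIntegrable_iff_integrableOn_Ioc_of_le hcd).2
      ((integrableOn_marchaudMajorant_div_mul hα hδ hw hM).mono_set
        fun _ hr ↦ hc.trans_lt hr.1)
  have hA : ∀ c d, IntervalIntegrable (fun r ↦ δ ^ (α - 1) * (r ^ (-α) * w r)) volume c d := by
    intro c d
    simpa using (intervalIntegrable_sub_rpow_mul hα.2 hw hM 0 c d).const_mul (δ ^ (α - 1))
  have hB := intervalIntegrable_div_sub_one_rpow_div_mul hα.2.le hδ hδb hw hM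
  have hnear : ∫ r in (0 : ℝ)..δ, δ ^ (α - 1) * (r ^ (-α) * w r) = ∫ r in (0 : ℝ)..δ, K r := by
    refine intervalIntegral.integral_congr fun r hr ↦ ?_
    rw [uIcc_of_le hδ.le] at hr
    simp only [hK]
    rw [inv_mul_marchaudMajorant_div_of_le hδ hr, mul_assoc]
  have hfar : (∫ r in δ..b, δ ^ (α - 1) * (r ^ (-α) * w r)) -
      ∫ r in δ..b, (r / δ - 1) ^ (1 - α) / r * w r ≤ ∫ r in δ..b, K r := by
    rw [← intervalIntegral.integral_sub (hA _ _) hB]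
    refine intervalIntegral.integral_mono_on hδb ((hA _ _).sub hB) (hKint hδ.le hδb) fun r hr ↦ ?_
    rw [← mul_assoc, ← sub_mul]
    exact mul_le_mul_of_nonneg_right
      (rpow_mul_rpow_neg_sub_le_inv_mul_marchaudMajorant_div ⟨hα.1.le, hα.2⟩ hδ hr.1) (hw0 r)
  have hsplit := intervalIntegral.integral_add_adjacent_intervals (hA 0 δ) (hA δ b)
  have hKsplit := intervalIntegral.integral_add_adjacent_intervals
    (hKint le_rfl hδ.le) (hKint hδ.le hδb)
  simp only [abelTransform, sub_zero, ← intervalIntegral.integral_const_mul]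
  linarith

theorem intervalIntegral_marchaudMajorant_div_mul_le {δ : ℝ} (hα : α ∈ Ioo 0 1) (hδ : 0 < δ)
    (hb : 0 ≤ b) (hw : AEStronglyMeasurable w) (hw0 : ∀ x, 0 ≤ w x) (hM : ∀ x, |w x| ≤ M) :
    ∫ r in (0 : ℝ)..b, δ⁻¹ * marchaudMajorant α (r / δ) * w r ≤
      ∫ u in Ioi 0, marchaudMajorant α u * w (δ * u) := by
  rw [integral_marchaudMajorant_mul_comp_mul hδ, intervalIntegral.integral_of_le hb]
  refine setIntegral_mono_set (integrableOn_marchaudMajorant_div_mul hα hδ hw hM)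
    ((ae_restrict_iff' measurableSet_Ioi).2 (.of_forall fun r (hr : 0 < r) ↦ ?_))
    Ioc_subset_Ioi_self.eventuallyLE
  have hwr : 0 ≤ w r := hw0 r
  simp only [marchaudMajorant, Pi.zero_apply]
  positivity

theorem abelTransform_nonneg {h : ℝ} (hh : h ≤ b) (hw0 : ∀ x, 0 ≤ w x) :
    0 ≤ abelTransform α b w h :=
  intervalIntegral.integral_nonneg hh fun r hr ↦
    mul_nonneg (Real.rpow_nonneg (sub_nonneg.2 hr.1) _) (hw0 r)

theorem integral_rpow_mul_abelTransform_sub_le {δ : ℝ} (hα : α ∈ Ioo 0 1) (hδ : 0 < δ)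
    (hδb : δ ≤ b) (hw : AEStronglyMeasurable w) (hw0 : ∀ x, 0 ≤ w x) (hM : ∀ x, |w x| ≤ M) :
    ∫ h in δ..b, h ^ (α - 2) * (abelTransform α b w 0 - abelTransform α b w h) ≤
      (1 - α)⁻¹ * ∫ u in Ioi 0, marchaudMajorant α u * w (δ * u) := by
  have hφ : IntervalIntegrable (fun h : ℝ ↦ h ^ (α - 2)) volume δ b :=
    intervalIntegrable_rpow_of_pos hδ hδb
  have hinv : 0 ≤ (1 - α)⁻¹ := inv_nonneg.2 (sub_pos.2 hα.2).le
  calc ∫ h in δ..b, h ^ (α - 2) * (abelTransform α b w 0 - abelTransform α b w h)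
      = (∫ h in δ..b, h ^ (α - 2)) * abelTransform α b w 0 -
          ∫ h in δ..b, h ^ (α - 2) * abelTransform α b w h := by
        simp only [mul_sub]
        rw [intervalIntegral.integral_sub (hφ.mul_const _)
          (intervalIntegrable_mul_abelTransform hα.2 hδb hφ.1 hw hM),
          intervalIntegral.integral_mul_const]
    _ ≤ (1 - α)⁻¹ * δ ^ (α - 1) * abelTransform α b w 0 -
          (1 - α)⁻¹ * ∫ r in δ..b, (r / δ - 1) ^ (1 - α) / r * w r := by
        rw [integral_rpow_mul_abelTransform hα.2 hδ hδb hw hM]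
        gcongr
        · exact abelTransform_nonneg (hδ.le.trans hδb) hw0
        · exact integral_rpow_sub_two_le hα.2 hδ hδb
    _ = (1 - α)⁻¹ * (δ ^ (α - 1) * abelTransform α b w 0 -
          ∫ r in δ..b, (r / δ - 1) ^ (1 - α) / r * w r) := by ring
    _ ≤ (1 - α)⁻¹ * ∫ u in Ioi 0, marchaudMajorant α u * w (δ * u) := mul_le_mul_of_nonneg_left
        ((rpow_mul_abelTransform_zero_sub_le hα hδ hδb hw hw0 hM).trans
          (intervalIntegral_marchaudMajorant_div_mul_le hα hδ (hδ.le.trans hδb) hw hw0 hM)) hinv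

theorem mul_rpow_sub_rpow_div_le_integral_of_forall_mul_le {c δ : ℝ} (hα : α ∈ Ioo 0 1)
    (hδ : 0 < δ) (hδb : δ ≤ b) (hw : AEStronglyMeasurable w) (hM : ∀ x, |w x| ≤ M)
    (hc : ∀ h ∈ Icc δ b, c * h ≤ abelTransform α b w 0 - abelTransform α b w h) :
    c * ((b ^ α - δ ^ α) / α) ≤
      ∫ h in δ..b, h ^ (α - 2) * (abelTransform α b w 0 - abelTransform α b w h) := by
  have hφ : ∀ β : ℝ, IntervalIntegrable (fun h : ℝ ↦ h ^ β) volume δ b := fun _ ↦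
    intervalIntegrable_rpow_of_pos hδ hδb
  calc c * ((b ^ α - δ ^ α) / α) = ∫ h in δ..b, c * h ^ (α - 1) := by
        rw [intervalIntegral.integral_const_mul, integral_rpow (Or.inl (by linarith [hα.1])),
          sub_add_cancel]
    _ ≤ ∫ h in δ..b, h ^ (α - 2) * (abelTransform α b w 0 - abelTransform α b w h) := by
        refine intervalIntegral.integral_mono_on hδb ((hφ _).const_mul c) ?_ fun h hh ↦ ?_
        · simp only [mul_sub]
          exact ((hφ _).mul_const _).sub
            (intervalIntegrable_mul_abelTransform hα.2 hδb (hφ _).1 hw hM)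
        · have hh0 : 0 < h := hδ.trans_le hh.1
          calc c * h ^ (α - 1) = h ^ (α - 2) * (c * h) := by
                rw [show α - 1 = α - 2 + 1 by ring, Real.rpow_add_one hh0.ne']
                ring
            _ ≤ _ := mul_le_mul_of_nonneg_left (hc h hh) (by positivity)

theorem nonpos_of_forall_mul_le_abelTransform_sub {c : ℝ} (hα : α ∈ Ioo 0 1) (hb : 0 < b)
    (hw : AEStronglyMeasurable w) (hw0 : ∀ x, 0 ≤ w x) (hM : ∀ x, |w x| ≤ M)
    (hlim : Tendsto w (𝓝[>] 0) (𝓝 0))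
    (hc : ∀ h ∈ Ioc 0 b, c * h ≤ abelTransform α b w 0 - abelTransform α b w h) : c ≤ 0 := by
  have hbound : ∀ δ ∈ Ioc 0 b, c * ((b ^ α - δ ^ α) / α) ≤
      (1 - α)⁻¹ * ∫ u in Ioi 0, marchaudMajorant α u * w (δ * u) := fun δ hδ ↦
    (mul_rpow_sub_rpow_div_le_integral_of_forall_mul_le hα hδ.1 hδ.2 hw hM
      fun h hh ↦ hc h ⟨hδ.1.trans_le hh.1, hh.2⟩).trans
      (integral_rpow_mul_abelTransform_sub_le hα hδ.1 hδ.2 hw hw0 hM)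
  have hleft : Tendsto (fun δ : ℝ ↦ c * ((b ^ α - δ ^ α) / α)) (𝓝[>] 0)
      (𝓝 (c * (b ^ α / α))) := by
    have hrpow := (Real.continuous_rpow_const hα.1.le).tendsto' 0 0 (Real.zero_rpow hα.1.ne')
    simpa using (((hrpow.mono_left nhdsWithin_le_nhds).const_sub (b ^ α)).div_const α).const_mul c
  have hright : Tendsto (fun δ ↦ (1 - α)⁻¹ * ∫ u in Ioi 0, marchaudMajorant α u * w (δ * u))
      (𝓝[>] 0) (𝓝 0) := by
    simpa using (tendsto_setIntegral_mul_comp_mul_nhdsGT (integrableOn_marchaudMajorant hα) hw hM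
      hlim).const_mul (1 - α)⁻¹
  have hle : c * (b ^ α / α) ≤ 0 := le_of_tendsto_of_tendsto hleft hright
    (eventually_of_mem (Ioc_mem_nhdsGT hb) hbound)
  exact nonpos_of_mul_nonpos_left hle (div_pos (Real.rpow_pos_of_pos hb α) hα.1)

theorem abelTransform_zero_sub_mono {a h : ℝ} (hα : α ∈ Ico 0 1) (hh : 0 ≤ h) (hhb : h ≤ b)
    (hba : b ≤ a) (hw : AEStronglyMeasurable w) (hw0 : ∀ x, 0 ≤ w x) (hM : ∀ x, |w x| ≤ M) :
    abelTransform α a w 0 - abelTransform α a w h ≤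
      abelTransform α b w 0 - abelTransform α b w h := by
  have hint := intervalIntegrable_sub_rpow_mul hα.2 hw hM
  have htail : ∫ r in b..a, (r - 0) ^ (-α) * w r ≤ ∫ r in b..a, (r - h) ^ (-α) * w r := by
    refine intervalIntegral.integral_mono_on_of_le_Ioo hba (hint 0 b a) (hint h b a) fun r hr ↦ ?_
    exact mul_le_mul_of_nonneg_right (Real.rpow_le_rpow_of_nonpos (by linarith [hr.1])
      (by linarith) (by linarith [hα.1])) (hw0 r)
  have hsplit0 := intervalIntegral.integral_add_adjacent_intervals (hint 0 0 b) (hint 0 b a)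
  have hsplit := intervalIntegral.integral_add_adjacent_intervals (hint h h b) (hint h b a)
  simp only [abelTransform]
  linarith

theorem abelTransform_hasDerivWithinAt_zero_nonneg {a d : ℝ} (hα : α ∈ Ioo 0 1) (ha : 0 < a)
    (hw : AEStronglyMeasurable w) (hw0 : ∀ x, 0 ≤ w x) (hM : ∀ x, |w x| ≤ M)
    (hlim : Tendsto w (𝓝[>] 0) (𝓝 0))
    (hd : HasDerivWithinAt (abelTransform α a w) d (Ioi 0) 0) : 0 ≤ d := by
  by_contra! hneg
  obtain ⟨c, hdc, hc⟩ := exists_between hneg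
  obtain ⟨b, ⟨hb : 0 < b, hba⟩, hslope⟩ : ∃ b ∈ Ioc 0 a, ∀ h ∈ Ioc 0 b,
      slope (abelTransform α a w) 0 h < c := by
    obtain ⟨ε, hε, hslope⟩ :=
      (mem_nhdsGT_iff_exists_Ioc_subset).1 (hd.limsup_slope_le' self_notMem_Ioi hdc)
    exact ⟨min ε a, ⟨lt_min hε ha, min_le_right _ _⟩,
      fun h hh ↦ hslope ⟨hh.1, hh.2.trans (min_le_left _ _)⟩⟩
  refine (neg_pos.2 hc).not_ge (nonpos_of_forall_mul_le_abelTransform_sub hα hb hw hw0 hM hlim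
    fun h hh ↦ le_trans ?_
      (abelTransform_zero_sub_mono ⟨hα.1.le, hα.2⟩ hh.1.le hh.2 hba hw hw0 hM))
  have hsl := hslope h hh
  rw [slope_def_field, sub_zero, div_lt_iff₀ hh.1] at hsl
  linarith

theorem abelTransform_const {h : ℝ} (hα : α < 1) (c : ℝ) :
    abelTransform α b (fun _ ↦ c) h = c * ((b - h) ^ (1 - α) / (1 - α)) := by
  have h1 : 1 - α ≠ 0 := (sub_pos.2 hα).ne'
  rw [abelTransform, intervalIntegral.integral_mul_const,
    intervalIntegral.integral_comp_sub_right (fun r ↦ r ^ (-α)) h,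
    integral_rpow (Or.inl (by linarith)), neg_add_eq_sub, sub_self, Real.zero_rpow h1, sub_zero,
    mul_comm]

end Abel

/-- The fractional integral of order `1 - α` of `v`, the function of which `riemannLiouville α v` is
the derivative. -/
def rlIntegral (α : ℝ) (v : ℝ → ℝ) (τ : ℝ) : ℝ :=
  ∫ s in Ioc 0 τ, (τ - s) ^ (-α) / Real.Gamma (1 - α) * v s

theorem rlIntegral_sub_eq_abelTransform {α t₀ h : ℝ} (hh : h ≤ t₀) (v : ℝ → ℝ) :
    rlIntegral α v (t₀ - h) =
      (Real.Gamma (1 - α))⁻¹ * abelTransform α t₀ (fun r ↦ v (t₀ - r)) h := by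
  have hrefl := intervalIntegral.integral_comp_sub_left (a := h) (b := t₀)
    (fun s ↦ (t₀ - h - s) ^ (-α) / Real.Gamma (1 - α) * v s) t₀
  rw [sub_self] at hrefl
  rw [rlIntegral, ← intervalIntegral.integral_of_le (sub_nonneg.2 hh), ← hrefl, abelTransform,
    ← intervalIntegral.integral_const_mul]
  refine intervalIntegral.integral_congr fun r _ ↦ ?_
  simp only [sub_sub_sub_cancel_left]
  ring

/-- The gap `v t₀ - v s` as a function of the distance `r = t₀ - s` travelled backwards from `t₀`.
It is extended by `0` outside `0 ≤ s ≤ t₀`, so that bounds on `[0, t₀]` become global ones. -/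
def backwardGap (v : ℝ → ℝ) (t₀ r : ℝ) : ℝ :=
  (Icc 0 t₀).indicator (fun s ↦ v t₀ - v s) (t₀ - r)

section BackwardGap

variable {α t₀ : ℝ} {v : ℝ → ℝ}

theorem backwardGap_nonneg (hmax : ∀ s ∈ Icc 0 t₀, v s ≤ v t₀) (r : ℝ) :
    0 ≤ backwardGap v t₀ r :=
  indicator_nonneg (fun s hs ↦ sub_nonneg.2 (hmax s hs)) _

theorem exists_abs_backwardGap_le (hbdd : BddBelow (v '' Icc 0 t₀))
    (hmax : ∀ s ∈ Icc 0 t₀, v s ≤ v t₀) : ∃ M, ∀ r, |backwardGap v t₀ r| ≤ M := by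
  obtain ⟨m, hm⟩ := hbdd
  refine ⟨max 0 (v t₀ - m), fun r ↦ ?_⟩
  rw [abs_of_nonneg (backwardGap_nonneg hmax r)]
  exact indicator_apply_le' (fun hs ↦ le_max_of_le_right (sub_le_sub_left (hm ⟨_, hs, rfl⟩) _))
    fun _ ↦ le_max_left _ _

theorem aestronglyMeasurable_backwardGap
    (hv : AEStronglyMeasurable v (volume.restrict (Icc 0 t₀))) :
    AEStronglyMeasurable (backwardGap v t₀) :=
  ((aestronglyMeasurable_indicator_iff measurableSet_Icc).2
    (aestronglyMeasurable_const.sub hv)).comp_measurePreserving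
      (volume.measurePreserving_sub_left t₀)

theorem tendsto_const_sub_nhdsGT_zero (t : ℝ) : Tendsto (fun h : ℝ ↦ t - h) (𝓝[>] 0) (𝓝[<] t) := by
  refine tendsto_nhdsWithin_iff.2 ⟨?_, ?_⟩
  · exact ((continuous_sub_left t).tendsto' 0 t (sub_zero t)).mono_left nhdsWithin_le_nhds
  · filter_upwards [self_mem_nhdsWithin] with h hh using sub_lt_self t hh

theorem tendsto_backwardGap (ht₀ : 0 < t₀) (hcont : ContinuousWithinAt v (Iio t₀) t₀) :
    Tendsto (backwardGap v t₀) (𝓝[>] 0) (𝓝 0) := by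
  have hgap : Tendsto (fun s ↦ v t₀ - v s) (𝓝[<] t₀) (𝓝 0) := by
    simpa using hcont.tendsto.const_sub (v t₀)
  have hcut : Tendsto ((Icc 0 t₀).indicator fun s ↦ v t₀ - v s) (𝓝[<] t₀) (𝓝 0) := by
    refine hgap.congr' ?_
    filter_upwards [Ioo_mem_nhdsLT ht₀] with s hs
    exact (indicator_of_mem (Ioo_subset_Icc_self hs) fun s ↦ v t₀ - v s).symm
  exact hcut.comp (tendsto_const_sub_nhdsGT_zero t₀)

theorem abelTransform_backwardGap {h M : ℝ} (hα : α < 1) (hh : h ∈ Icc 0 t₀)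
    (hv : AEStronglyMeasurable v (volume.restrict (Icc 0 t₀)))
    (hM : ∀ r, |backwardGap v t₀ r| ≤ M) :
    abelTransform α t₀ (backwardGap v t₀) h =
      v t₀ * ((t₀ - h) ^ (1 - α) / (1 - α)) - Real.Gamma (1 - α) * rlIntegral α v (t₀ - h) := by
  have hΓ : Real.Gamma (1 - α) ≠ 0 := (Real.Gamma_pos_of_pos (sub_pos.2 hα)).ne'
  have hsub : abelTransform α t₀ (fun r ↦ v (t₀ - r)) h =
      abelTransform α t₀ (fun _ ↦ v t₀) h - abelTransform α t₀ (backwardGap v t₀) h := by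
    simp only [abelTransform]
    rw [← intervalIntegral.integral_sub
      (intervalIntegrable_sub_rpow_mul hα aestronglyMeasurable_const (fun _ ↦ le_rfl) h h t₀)
      (intervalIntegrable_sub_rpow_mul hα (aestronglyMeasurable_backwardGap hv) hM h h t₀)]
    refine intervalIntegral.integral_congr fun r hr ↦ ?_
    rw [uIcc_of_le hh.2] at hr
    have hmem : t₀ - r ∈ Icc 0 t₀ := ⟨sub_nonneg.2 hr.2, sub_le_self _ (hh.1.trans hr.1)⟩
    simp only [backwardGap, indicator_of_mem hmem]
    ring
  rw [rlIntegral_sub_eq_abelTransform hh.2, mul_inv_cancel_left₀ hΓ, hsub, abelTransform_const hα,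
    sub_sub_cancel]

theorem hasDerivWithinAt_abelTransform_backwardGap {M D : ℝ} (hα : α < 1) (ht₀ : 0 < t₀)
    (hv : AEStronglyMeasurable v (volume.restrict (Icc 0 t₀)))
    (hM : ∀ r, |backwardGap v t₀ r| ≤ M)
    (hD : HasDerivWithinAt (rlIntegral α v) D (Iio t₀) t₀) :
    HasDerivWithinAt (abelTransform α t₀ (backwardGap v t₀))
      (Real.Gamma (1 - α) * D - v t₀ * t₀ ^ (-α)) (Ioi 0) 0 := by
  have hreflect : HasDerivWithinAt (fun h ↦ t₀ - h) (-1) (Ioi 0) 0 :=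
    (hasDerivWithinAt_id 0 _).const_sub t₀
  have hpow : HasDerivWithinAt (fun h ↦ v t₀ * ((t₀ - h) ^ (1 - α) / (1 - α)))
      (-(v t₀ * t₀ ^ (-α))) (Ioi 0) 0 := by
    have h1 : 1 - α ≠ 0 := (sub_pos.2 hα).ne'
    convert! ((hreflect.rpow_const (p := 1 - α) (Or.inl (by simpa using ht₀.ne'))).div_const
      (1 - α)).const_mul (v t₀) using 1
    rw [sub_zero, sub_sub_cancel_left]
    field_simp
  have hrl : HasDerivWithinAt (fun h ↦ rlIntegral α v (t₀ - h)) (-1 * D) (Ioi 0) 0 :=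
    HasDerivWithinAt.scomp_of_eq 0 hD hreflect (fun h (hh : 0 < h) ↦ sub_lt_self t₀ hh)
      (sub_zero t₀).symm
  have heq : ∀ h ∈ Icc 0 t₀, abelTransform α t₀ (backwardGap v t₀) h =
      v t₀ * ((t₀ - h) ^ (1 - α) / (1 - α)) - Real.Gamma (1 - α) * rlIntegral α v (t₀ - h) :=
    fun h hh ↦ abelTransform_backwardGap hα hh hv hM
  refine ((hpow.sub (hrl.const_mul _)).congr_of_eventuallyEq
    (eventually_of_mem (Icc_mem_nhdsGT ht₀) heq) (heq 0 (left_mem_Icc.2 ht₀.le))).congr_deriv ?_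
  ring

theorem mul_rpow_div_Gamma_le_of_hasDerivWithinAt_rlIntegral {D : ℝ} (hα : α ∈ Ioo 0 1)
    (ht₀ : 0 < t₀) (hv : AEStronglyMeasurable v (volume.restrict (Icc 0 t₀)))
    (hcont : ContinuousWithinAt v (Iio t₀) t₀) (hbdd : BddBelow (v '' Icc 0 t₀))
    (hmax : ∀ s ∈ Icc 0 t₀, v s ≤ v t₀)
    (hD : HasDerivWithinAt (rlIntegral α v) D (Iio t₀) t₀) :
    v t₀ * t₀ ^ (-α) / Real.Gamma (1 - α) ≤ D := by
  obtain ⟨M, hM⟩ := exists_abs_backwardGap_le hbdd hmax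
  have hnonneg : 0 ≤ Real.Gamma (1 - α) * D - v t₀ * t₀ ^ (-α) :=
    abelTransform_hasDerivWithinAt_zero_nonneg hα ht₀ (aestronglyMeasurable_backwardGap hv)
      (backwardGap_nonneg hmax) hM (tendsto_backwardGap ht₀ hcont)
      (hasDerivWithinAt_abelTransform_backwardGap hα.2 ht₀ hv hM hD)
  rw [div_le_iff₀' (Real.Gamma_pos_of_pos (sub_pos.2 hα.2))]
  exact sub_nonneg.1 hnonneg

theorem rl_deriv_nonneg_at_max_general (hα : α ∈ Ioo 0 1) (ht₀ : 0 < t₀)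
    (hv : AEStronglyMeasurable v (volume.restrict (Icc 0 t₀)))
    (hcont : ContinuousWithinAt v (Iio t₀) t₀) (hbdd : BddBelow (v '' Icc 0 t₀))
    (hmax : ∀ s ∈ Icc 0 t₀, v s ≤ v t₀) (hv₀ : 0 ≤ v t₀) :
    0 ≤ riemannLiouville α v t₀ := by
  by_cases hdiff : DifferentiableAt ℝ (rlIntegral α v) t₀
  · have hΓ : 0 < Real.Gamma (1 - α) := Real.Gamma_pos_of_pos (sub_pos.2 hα.2)
    calc 0 ≤ v t₀ * t₀ ^ (-α) / Real.Gamma (1 - α) := by positivity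
      _ ≤ deriv (rlIntegral α v) t₀ :=
        mul_rpow_div_Gamma_le_of_hasDerivWithinAt_rlIntegral hα ht₀ hv hcont hbdd hmax
          hdiff.hasDerivAt.hasDerivWithinAt
  · exact (deriv_zero_of_not_differentiableAt hdiff).ge

end BackwardGap

theorem rl_deriv_nonneg_at_max (T α : ℝ) (hT : 0 < T) (hα : α ∈ Ioo (0:ℝ) 1)
    (f f' : ℝ → ℝ)
    (hfc : ContinuousOn f (Icc 0 T))
    (hfderiv : ∀ t ∈ Ioo 0 T, HasDerivAt f (f' t) t)
    (hf'int : IntegrableOn f' (Ioc 0 T))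
    (t0 : ℝ) (ht0 : t0 ∈ Ioc 0 T)
    (hmax : ∀ s ∈ Icc 0 T, f s ≤ f t0) :
    0 ≤ riemannLiouville α (fun t => f t - f 0) t0 := by
  have hsub : Icc 0 t0 ⊆ Icc 0 T := Icc_subset_Icc_right ht0.2
  have hv : ContinuousOn (fun t => f t - f 0) (Icc 0 t0) := (hfc.mono hsub).sub continuousOn_const
  exact rl_deriv_nonneg_at_max_general hα ht0.1 (hv.aestronglyMeasurable measurableSet_Icc)
    ((hv t0 (right_mem_Icc.2 ht0.1.le)).mono_of_mem_nhdsWithin (Icc_mem_nhdsLT ht0.1))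
    (isCompact_Icc.bddBelow_image hv) (fun s hs ↦ sub_le_sub_right (hmax s (hsub hs)) _)
    (sub_nonneg.2 (hmax 0 (left_mem_Icc.2 hT.le)))
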